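/- For every request sequence R, the sum of all radii computed by Algorithm Square is at most three times the optimum: Σ_{i=1}^{N} ρ(i) ≤ 3·|opt|. -/

import Mathlib

open Finset

/-- A replica is a pair `(v, t)` of a network node and a time. -/
abbrev Replica : Type := ℕ × ℕ

/-- A (directed) grid edge is a pair of replicas. -/
abbrev GEdge : Type := Replica × Replica

/-- Horizontal directed edge `((v,t),(v+1,t))`. -/
def isHoriz (e : GEdge) : Prop := e.2 = (e.1.1 + 1, e.1.2)

/-- Vertical arc `((v,t),(v,t+1))`. -/
def isArc (e : GEdge) : Prop := e.2 = (e.1.1, e.1.2 + 1)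

def isGridEdge (e : GEdge) : Prop := isHoriz e ∨ isArc e

/-- The quarter ball `B(r,ρ)`: replicas `(u,s)` with `u ≤ v`, `s ≤ t` and
`(v−u)+(t−s) ≤ ρ`. -/
def qball (r : Replica) (ρ : ℕ) : Set Replica :=
  {q | q.1 ≤ r.1 ∧ q.2 ≤ r.2 ∧ (r.1 - q.1) + (r.2 - q.2) ≤ ρ}

/-- Grid edges with both endpoints in the quarter ball `B(r,ρ)`. -/
def ballEdge (r : Replica) (ρ : ℕ) (e : GEdge) : Prop :=
  isGridEdge e ∧ e.1 ∈ qball r ρ ∧ e.2 ∈ qball r ρ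

/-- Two quarter balls are edge-disjoint if they share no grid edge. -/
def BallsEdgeDisjoint (r : Replica) (ρ : ℕ) (r' : Replica) (ρ' : ℕ) : Prop :=
  ∀ e : GEdge, ¬ (ballEdge r ρ e ∧ ballEdge r' ρ' e)

/-- The square `Sq(r,ρ) = [v−ρ,v] × [t−ρ,t]`. -/
def SqRect (r : Replica) (ρ : ℕ) : Set Replica :=
  {q | r.1 - ρ ≤ q.1 ∧ q.1 ≤ r.1 ∧ r.2 - ρ ≤ q.2 ∧ q.2 ≤ r.2}

/-- Directed `L∞` distance `d∞(q,r)`: `max(v−u, t−s)` if `u ≤ v` and `s ≤ t`,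
and `∞` otherwise. -/
def distInf (q r : Replica) : ℕ∞ :=
  if q.1 ≤ r.1 ∧ q.2 ≤ r.2 then ((max (r.1 - q.1) (r.2 - q.2) : ℕ) : ℕ∞) else ⊤

/-- The replicas of an edge set: `(0,0)` together with all endpoints of its edges. -/
def Repl (F : Finset GEdge) : Set Replica :=
  insert ((0, 0) : Replica) {q | ∃ e ∈ F, q = e.1 ∨ q = e.2}

/-- The arcs of the vertical path at node `u` from time `s` to time `τ`. -/
def vertPath (u s τ : ℕ) : Finset GEdge :=
  (Finset.range (τ - s)).image (fun k => ((u, s + k), (u, s + k + 1)))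

/-- The horizontal edges of the path at time `τ` from node `u` to node `w`. -/
def horizPath (τ u w : ℕ) : Finset GEdge :=
  (Finset.range (w - u)).image (fun k => ((u + k, τ), (u + k + 1, τ)))

/-- A directed path from `a` to `b` all of whose edges belong to `F`. -/
def PathIn (F : Finset GEdge) (a b : Replica) : Prop :=
  ∃ (L : ℕ) (f : ℕ → Replica), f 0 = a ∧ f L = b ∧ ∀ k < L, (f k, f (k + 1)) ∈ F

/-- An execution of Algorithm `Square` on a request sequence
`r_1 = (v 1, t 1), …, r_N = (v N, t N)` (with `t 0 = 0` and nondecreasing times).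
`sol i` is the edge set after handling request `i`; `ρ i` is the radius of
request `i`; `(u' i, s' i)` is its closest replica and `(us i, ss i)` its
serving replica.  The fields record the specification SQ1–SQ5. -/
structure SquareRun where
  N : ℕ
  v : ℕ → ℕ
  t : ℕ → ℕ
  ρ : ℕ → ℕ
  u' : ℕ → ℕ
  s' : ℕ → ℕ
  us : ℕ → ℕ
  ss : ℕ → ℕ
  sol : ℕ → Finset GEdge
  t_zero : t 0 = 0
  t_mono : ∀ i j, i ≤ j → j ≤ N → t i ≤ t j
  sol_zero : sol 0 = ∅
  /-- SQ2: `ρ i` is a lower bound on the distance from every replica of the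
  current solution (after the SQ1 additions) to `r_i`. -/
  rho_min : ∀ i, 1 ≤ i → i ≤ N →
    ∀ q ∈ Repl (sol (i - 1) ∪ vertPath 0 (t (i - 1)) (t i)),
      (ρ i : ℕ∞) ≤ distInf q (v i, t i)
  /-- SQ2: the closest replica belongs to the current solution. -/
  closest_mem : ∀ i, 1 ≤ i → i ≤ N →
    (u' i, s' i) ∈ Repl (sol (i - 1) ∪ vertPath 0 (t (i - 1)) (t i))
  /-- SQ2: the closest replica attains the radius. -/
  closest_dist : ∀ i, 1 ≤ i → i ≤ N →
    distInf (u' i, s' i) (v i, t i) = (ρ i : ℕ∞)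
  /-- SQ2: among replicas of node `u' i`, the closest replica is the latest. -/
  closest_late : ∀ i, 1 ≤ i → i ≤ N → ∀ s, s ≤ t i →
    (u' i, s) ∈ Repl (sol (i - 1) ∪ vertPath 0 (t (i - 1)) (t i)) → s ≤ s' i
  /-- SQ3: the serving replica is in the current solution and in `Sq(r_i, 5ρ i)`. -/
  serv_mem : ∀ i, 1 ≤ i → i ≤ N →
    (us i, ss i) ∈ Repl (sol (i - 1) ∪ vertPath 0 (t (i - 1)) (t i)) ∧
      (us i, ss i) ∈ SqRect (v i, t i) (5 * ρ i)
  /-- SQ3: the serving node is leftmost. -/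
  serv_min : ∀ i, 1 ≤ i → i ≤ N →
    ∀ q ∈ Repl (sol (i - 1) ∪ vertPath 0 (t (i - 1)) (t i)),
      q ∈ SqRect (v i, t i) (5 * ρ i) → us i ≤ q.1
  /-- SQ3: among those, the serving time is latest. -/
  serv_late : ∀ i, 1 ≤ i → i ≤ N →
    ∀ q ∈ Repl (sol (i - 1) ∪ vertPath 0 (t (i - 1)) (t i)),
      q ∈ SqRect (v i, t i) (5 * ρ i) → q.1 = us i → q.2 ≤ ss i
  /-- SQ1 + SQ4 + SQ5: the edges added while handling request `i`. -/
  step : ∀ i, 1 ≤ i → i ≤ N →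
    sol i = (sol (i - 1) ∪ vertPath 0 (t (i - 1)) (t i))
      ∪ vertPath (us i) (ss i) (t i) ∪ horizPath (t i) (us i) (v i)
      ∪ vertPath (us i) (t i) (t i + 4 * ρ i)

namespace SquareRun

variable (S : SquareRun)

/-- The `i`-th request replica. -/
def req (i : ℕ) : Replica := (S.v i, S.t i)

/-- The edges added in steps SQ4 and SQ5 while handling request `i`. -/
def added45 (i : ℕ) : Finset GEdge :=
  vertPath (S.us i) (S.ss i) (S.t i) ∪ horizPath (S.t i) (S.us i) (S.v i)
    ∪ vertPath (S.us i) (S.t i) (S.t i + 4 * S.ρ i)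

/-- Request `i` is covered if `v_i − u^s_i ≥ ρ(i)`. -/
def covered (i : ℕ) : Prop := S.ρ i ≤ S.v i - S.us i

def uncovered (i : ℕ) : Prop := ¬ S.covered i

/-- A feasible solution of the DMCD instance given by the requests of `S`. -/
def Feasible (F : Finset GEdge) : Prop :=
  (∀ e ∈ F, isGridEdge e) ∧
  (∀ i, 1 ≤ i → i ≤ S.N → PathIn F (0, 0) (S.req i)) ∧
  (∀ τ, τ < S.t S.N → ∃ w, ((w, τ), (w, τ + 1)) ∈ F)

/-- `S.IsParent i j` means `parent(j) = i`:  `i` is the least index greater than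
`j` such that `r_i` is uncovered and `SQball(j)`, `SQball(i)` are not
edge-disjoint. -/
def IsParent (i j : ℕ) : Prop :=
  1 ≤ j ∧ j < i ∧ i ≤ S.N ∧ S.uncovered j ∧ S.uncovered i ∧
    ¬ BallsEdgeDisjoint (S.req j) (S.ρ j) (S.req i) (S.ρ i) ∧
    ∀ k, j < k → k < i → S.uncovered k →
      BallsEdgeDisjoint (S.req j) (S.ρ j) (S.req k) (S.ρ k)

/-- A root: an uncovered request with no parent. -/
def IsRoot (i : ℕ) : Prop :=
  1 ≤ i ∧ i ≤ S.N ∧ S.uncovered i ∧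
    ∀ j, i < j → j ≤ S.N → S.uncovered j →
      BallsEdgeDisjoint (S.req i) (S.ρ i) (S.req j) (S.ρ j)

/-- `i ∈ Tree(iStar)`: one can go from `i` to `iStar` by repeatedly passing from
a child to its parent. -/
def InTree (i iStar : ℕ) : Prop :=
  Relation.ReflTransGen (fun a b => S.IsParent b a) i iStar

end SquareRun

/-!
The final steps of any path from the origin to `r_i` stay inside the quarter ball of `r_i`, so
requests with pairwise edge-disjoint balls have total radius at most `|opt|`. This bounds the
covered requests, since the ball of a covered request is edge-disjoint from all later balls, and
it bounds the roots, whose balls are pairwise edge-disjoint by definition.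

It remains to see that the roots carry at least half of the total radius of the uncovered requests.
The vertical path added in step SQ5 makes the time intervals `[t_j, t_j + 4ρ(j))` of the children
`j` of an uncovered request `i` pairwise disjoint, and the serving rule SQ3 forces `4ρ(j) < ρ(i)`;
hence these intervals pack into `[t_i - ρ(i), t_i + ρ(i))`, and the children of `i` have total
radius at most `ρ(i) / 2`.
-/

theorem sum_card_le_card_of_pairwiseDisjoint {ι α : Type*} {I : Finset ι} {f : ι → Finset α}
    {s : Finset α} (hdisj : (I : Set ι).PairwiseDisjoint f) (hsub : ∀ i ∈ I, f i ⊆ s) :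
    ∑ i ∈ I, #(f i) ≤ #s := by
  classical
  rw [← card_biUnion hdisj]
  exact card_le_card (biUnion_subset.2 hsub)

/-- `P i j` is to be read as `i` being the parent of `j` in a forest on `U` with roots in `R`. -/
theorem sum_le_two_mul_sum_of_children {ι : Type*} {U R : Finset ι} {P : ι → ι → Prop}
    [DecidableRel P] {w : ι → ℕ} (hparent : ∀ j ∈ U, j ∉ R → ∃ i ∈ U, P i j)
    (hchildren : ∀ i ∈ U, 2 * ∑ j ∈ U with P i j, w j ≤ w i) :
    ∑ i ∈ U, w i ≤ 2 * ∑ i ∈ R, w i := by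
  classical
  have hnonroots : ∑ j ∈ U with j ∉ R, w j ≤ ∑ i ∈ U, ∑ j ∈ U with P i j, w j :=
    calc ∑ j ∈ U with j ∉ R, w j
      _ ≤ ∑ j ∈ U with j ∉ R, ∑ i ∈ U with P i j, w j := by
        refine sum_le_sum fun j hj ↦ ?_
        obtain ⟨hjU, hjR⟩ := mem_filter.1 hj
        obtain ⟨i, hi, hij⟩ := hparent j hjU hjR
        exact single_le_sum (f := fun _ ↦ w j) (fun _ _ ↦ zero_le) (mem_filter.2 ⟨hi, hij⟩)
      _ ≤ ∑ j ∈ U, ∑ i ∈ U with P i j, w j := sum_le_sum_of_subset (filter_subset _ _)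
      _ = ∑ i ∈ U, ∑ j ∈ U with P i j, w j :=
        sum_comm' fun j i ↦ by simp only [mem_filter]; tauto
  have hhalf : 2 * ∑ i ∈ U, ∑ j ∈ U with P i j, w j ≤ ∑ i ∈ U, w i := by
    rw [mul_sum]
    exact sum_le_sum hchildren
  have hroots : ∑ j ∈ U with j ∈ R, w j ≤ ∑ j ∈ R, w j :=
    sum_le_sum_of_subset fun j hj ↦ (mem_filter.1 hj).2
  have hsplit := sum_filter_add_sum_filter_not U (· ∈ R) w
  omega

theorem distInf_of_le {q r : Replica} (h : q ≤ r) :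
    distInf q r = (max (r.1 - q.1) (r.2 - q.2) : ℕ) :=
  if_pos h

theorem le_of_distInf_eq_natCast {q r : Replica} {n : ℕ} (h : distInf q r = n) : q ≤ r := by
  by_contra hqr
  rw [distInf, if_neg (by rwa [← Prod.le_def])] at h
  exact ENat.top_ne_natCast n h

theorem BallsEdgeDisjoint.symm {r r' : Replica} {ρ ρ' : ℕ} (h : BallsEdgeDisjoint r ρ r' ρ') :
    BallsEdgeDisjoint r' ρ' r ρ :=
  fun e he ↦ h e he.symm

/-- Among the heads of common edges of two quarter balls, the componentwise minimum of the two
centers is the closest to both. -/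
theorem not_ballsEdgeDisjoint_iff {r r' : Replica} {ρ ρ' : ℕ} :
    ¬ BallsEdgeDisjoint r ρ r' ρ' ↔
      0 < min r.1 r'.1 + min r.2 r'.2 ∧
      r.1 + r.2 < min r.1 r'.1 + min r.2 r'.2 + ρ ∧
      r'.1 + r'.2 < min r.1 r'.1 + min r.2 r'.2 + ρ' := by
  simp only [BallsEdgeDisjoint, ballEdge, isGridEdge, isHoriz, isArc, qball, Set.mem_ofPred_eq,
    not_forall, not_not]
  constructor
  · rintro ⟨⟨tail, head⟩, ⟨hgrid, htail, hhead⟩, -, htail', hhead'⟩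
    simp only [Prod.ext_iff] at hgrid htail hhead htail' hhead'
    omega
  · rintro ⟨hpos, hr, hr'⟩
    obtain hfst | hfst := Nat.eq_zero_or_pos (min r.1 r'.1)
    · refine ⟨((0, min r.2 r'.2 - 1), (0, min r.2 r'.2)), ?_⟩
      simp only [Prod.mk.injEq, true_and]
      omega
    · refine ⟨((min r.1 r'.1 - 1, min r.2 r'.2), (min r.1 r'.1, min r.2 r'.2)), ?_⟩
      simp only [Prod.mk.injEq, and_true]
      omega

section GridPaths

variable {F : Finset GEdge} {f : ℕ → Replica} {L : ℕ}

theorem gridPath_le_and_add_eq (hf : ∀ k < L, isGridEdge (f k, f (k + 1))) {k l : ℕ}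
    (hkl : k ≤ l) (hl : l ≤ L) :
    f k ≤ f l ∧ (f l).1 + (f l).2 + k = (f k).1 + (f k).2 + l := by
  induction l, hkl using Nat.le_induction with
  | base => exact ⟨le_rfl, rfl⟩
  | succ l _ ih =>
    have ih := ih (by omega)
    have hstep := hf l hl
    simp only [isGridEdge, isHoriz, isArc, Prod.ext_iff, Prod.le_def] at hstep ih ⊢
    omega

theorem le_card_filter_ballEdge {q r : Replica} {ρ : ℕ} [DecidablePred (ballEdge r ρ)]
    (hgrid : ∀ e ∈ F, isGridEdge e) (hpath : PathIn F q r) (hρ : q.1 + q.2 + ρ ≤ r.1 + r.2) :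
    ρ ≤ #{e ∈ F | ballEdge r ρ e} := by
  obtain ⟨L, f, rfl, rfl, hf⟩ := hpath
  have hstep : ∀ k < L, isGridEdge (f k, f (k + 1)) := fun k hk ↦ hgrid _ (hf k hk)
  have hlevel : ∀ k ≤ L, (f k).1 + (f k).2 = (f 0).1 + (f 0).2 + k := fun k hk ↦
    (gridPath_le_and_add_eq hstep k.zero_le hk).2
  have hL := hlevel L le_rfl
  have hball : ∀ k ≤ L, L ≤ k + ρ → f k ∈ qball (f L) ρ := by
    intro k hk hkρ
    obtain ⟨⟨hfst, hsnd⟩, hadd⟩ := gridPath_le_and_add_eq hstep hk le_rfl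
    exact ⟨hfst, hsnd, by omega⟩
  refine le_card_of_inj_on_range (fun d ↦ (f (L - ρ + d), f (L - ρ + d + 1))) ?_ ?_
  · intro d hd
    exact mem_filter.2 ⟨hf _ (by omega), hstep _ (by omega), hball _ (by omega) (by omega),
      hball _ (by omega) (by omega)⟩
  · intro d hd d' hd' heq
    have hd := hlevel (L - ρ + d) (by omega)
    have hd' := hlevel (L - ρ + d') (by omega)
    rw [(Prod.mk.inj heq).1] at hd
    omega

theorem sum_radii_le_card_of_ballsEdgeDisjoint {ι : Type*} {I : Finset ι} {q : Replica}
    {r : ι → Replica} {ρ : ι → ℕ} (hgrid : ∀ e ∈ F, isGridEdge e)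
    (hpath : ∀ i ∈ I, PathIn F q (r i))
    (hρ : ∀ i ∈ I, q.1 + q.2 + ρ i ≤ (r i).1 + (r i).2)
    (hdisj : (I : Set ι).Pairwise fun i j ↦ BallsEdgeDisjoint (r i) (ρ i) (r j) (ρ j)) :
    ∑ i ∈ I, ρ i ≤ #F := by
  classical
  calc ∑ i ∈ I, ρ i
    _ ≤ ∑ i ∈ I, #{e ∈ F | ballEdge (r i) (ρ i) e} :=
      sum_le_sum fun i hi ↦ le_card_filter_ballEdge hgrid (hpath i hi) (hρ i hi)
    _ ≤ #F := by
      refine sum_card_le_card_of_pairwiseDisjoint (fun i hi j hj hij ↦ ?_)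
        fun i _ ↦ filter_subset _ _
      exact disjoint_filter.2 fun e _ hei hej ↦ hdisj hi hj hij e ⟨hei, hej⟩

end GridPaths

section Replicas

variable {F G : Finset GEdge} {u w s t x : ℕ} {q : Replica}

theorem Repl_mono (h : F ⊆ G) : Repl F ⊆ Repl G :=
  Set.insert_subset_insert fun _ ⟨e, he, hq⟩ ↦ ⟨e, h he, hq⟩

theorem mem_Repl_union : q ∈ Repl (F ∪ G) ↔ q ∈ Repl F ∨ q ∈ Repl G := by
  simp only [Repl, Set.mem_insert_iff, Set.mem_ofPred_eq, mem_union]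
  grind

theorem mem_Repl_of_vertPath_subset (h : vertPath u s t ⊆ F) (hs : (u, s) ∈ Repl F)
    (hsx : s ≤ x) (hxt : x ≤ t) : (u, x) ∈ Repl F := by
  obtain rfl | hlt := hsx.eq_or_lt
  · exact hs
  · refine Or.inr ⟨((u, x - 1), (u, x)), h (mem_image.2 ⟨x - 1 - s, ?_⟩), Or.inr rfl⟩
    simp only [mem_range, Prod.mk.injEq, true_and]
    omega

theorem mem_Repl_of_horizPath_subset (h : horizPath t u w ⊆ F) (hu : (u, t) ∈ Repl F)
    (hux : u ≤ x) (hxw : x ≤ w) : (x, t) ∈ Repl F := by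
  obtain rfl | hlt := hux.eq_or_lt
  · exact hu
  · refine Or.inr ⟨((x - 1, t), (x, t)), h (mem_image.2 ⟨x - 1 - u, ?_⟩), Or.inr rfl⟩
    simp only [mem_range, Prod.mk.injEq, and_true]
    omega

theorem mem_Repl_vertPath (hq : q ∈ Repl (vertPath u s t)) :
    q = (0, 0) ∨ q.1 = u ∧ s ≤ q.2 ∧ q.2 ≤ t := by
  refine hq.imp_right ?_
  rintro ⟨e, he, hqe⟩
  obtain ⟨k, hk, rfl⟩ := mem_image.1 he
  have hk := mem_range.1 hk
  obtain rfl | rfl := hqe <;> simp only [true_and] <;> omega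

theorem mem_Repl_horizPath (hq : q ∈ Repl (horizPath t u w)) :
    q = (0, 0) ∨ q.2 = t ∧ u ≤ q.1 ∧ q.1 ≤ w := by
  refine hq.imp_right ?_
  rintro ⟨e, he, hqe⟩
  obtain ⟨k, hk, rfl⟩ := mem_image.1 he
  have hk := mem_range.1 hk
  obtain rfl | rfl := hqe <;> simp only [true_and] <;> omega

end Replicas

namespace SquareRun

variable {S : SquareRun} {i j k l : ℕ}

section Growth

/-- The solution in which request `i` looks for its closest and its serving replica, that is,
`Square(i - 1)` together with the arcs added in step SQ1. -/
def current (S : SquareRun) (i : ℕ) : Finset GEdge :=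
  S.sol (i - 1) ∪ vertPath 0 (S.t (i - 1)) (S.t i)

theorem sol_eq (hi : 1 ≤ i) (hiN : i ≤ S.N) : S.sol i = S.current i ∪ S.added45 i := by
  simp only [S.step i hi hiN, current, added45, union_assoc]

theorem sol_mono (hij : i ≤ j) (hj : j ≤ S.N) : S.sol i ⊆ S.sol j := by
  induction j, hij using Nat.le_induction with
  | base => exact Subset.rfl
  | succ n _ ih =>
    rw [sol_eq (by omega) hj, current, Nat.add_sub_cancel]
    exact (ih (by omega)).trans (subset_union_left.trans subset_union_left)

theorem sol_subset_current (hij : i < j) (hj : j ≤ S.N) : S.sol i ⊆ S.current j :=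
  (sol_mono (by omega) (by omega)).trans subset_union_left

theorem mem_Repl_current_succ {q : Replica} (hl : 1 ≤ l) (hlN : l ≤ S.N)
    (hq : q ∈ Repl (S.current (l + 1))) :
    q.1 = 0 ∨ q ∈ Repl (S.current l) ∨ q ∈ Repl (S.added45 l) := by
  rw [current, Nat.add_sub_cancel, mem_Repl_union, sol_eq hl hlN, mem_Repl_union] at hq
  obtain hq | hq := hq
  · exact Or.inr hq
  · exact Or.inl ((mem_Repl_vertPath hq).elim (congrArg Prod.fst) And.left)

theorem mem_Repl_current_cases {q : Replica} (hj : 1 ≤ j) (hji : j ≤ i) (hi : i ≤ S.N)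
    (hq : q ∈ Repl (S.current i)) :
    q.1 = 0 ∨ q ∈ Repl (S.current j) ∨ ∃ l, j ≤ l ∧ l < i ∧ q ∈ Repl (S.added45 l) := by
  induction i, hji using Nat.le_induction with
  | base => exact Or.inr (Or.inl hq)
  | succ n hjn ih =>
    obtain hq | hq | hq := mem_Repl_current_succ (by omega) (by omega) hq
    · exact Or.inl hq
    · exact (ih (by omega) hq).imp_right
        (Or.imp_right fun ⟨l, hjl, hln, hql⟩ ↦ ⟨l, hjl, by omega, hql⟩)
    · exact Or.inr (Or.inr ⟨n, hjn, n.lt_succ_self, hq⟩)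

theorem fst_eq_zero_of_mem_Repl_current_one {q : Replica} (hq : q ∈ Repl (S.current 1)) :
    q.1 = 0 := by
  rw [current, Nat.sub_self, S.sol_zero, empty_union] at hq
  exact (mem_Repl_vertPath hq).elim (congrArg Prod.fst) And.left

theorem us_le_v (S : SquareRun) (hi : 1 ≤ i) (hiN : i ≤ S.N) : S.us i ≤ S.v i :=
  (S.serv_mem i hi hiN).2.2.1

theorem ss_le_t (S : SquareRun) (hi : 1 ≤ i) (hiN : i ≤ S.N) : S.ss i ≤ S.t i :=
  (S.serv_mem i hi hiN).2.2.2.2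

theorem t_le_ss_add (S : SquareRun) (hi : 1 ≤ i) (hiN : i ≤ S.N) : S.t i ≤ S.ss i + 5 * S.ρ i :=
  Nat.sub_le_iff_le_add.1 (S.serv_mem i hi hiN).2.2.2.1

theorem mem_Repl_added45 {q : Replica} (hl : 1 ≤ l) (hlN : l ≤ S.N)
    (hq : q ∈ Repl (S.added45 l)) :
    q.1 = 0 ∨ S.us l ≤ q.1 ∧ q.1 ≤ S.v l ∧
      (q.2 ≤ S.t l ∨ q.1 = S.us l ∧ q.2 ≤ S.t l + 4 * S.ρ l) := by
  have hus := S.us_le_v hl hlN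
  rw [added45, mem_Repl_union, mem_Repl_union] at hq
  obtain (hq | hq) | hq := hq
  · have := mem_Repl_vertPath hq
    simp only [Prod.ext_iff] at this
    omega
  · have := mem_Repl_horizPath hq
    simp only [Prod.ext_iff] at this
    omega
  · have := mem_Repl_vertPath hq
    simp only [Prod.ext_iff] at this
    omega

theorem zero_t_mem_Repl_sol (hi : i ≤ S.N) : (0, S.t i) ∈ Repl (S.sol i) := by
  induction i with
  | zero => exact Or.inl (by rw [S.t_zero])
  | succ n ih =>
    have hcurrent : S.current (n + 1) ⊆ S.sol (n + 1) :=
      (sol_eq n.succ_pos hi).symm ▸ subset_union_left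
    exact mem_Repl_of_vertPath_subset (subset_union_right.trans hcurrent)
      (Repl_mono (sol_mono n.le_succ hi) (ih (by omega)))
      (S.t_mono n (n + 1) n.le_succ hi) le_rfl

theorem zero_t_mem_Repl_current (hi : 1 ≤ i) (hiN : i ≤ S.N) :
    (0, S.t i) ∈ Repl (S.current i) :=
  mem_Repl_of_vertPath_subset subset_union_right
    (Repl_mono subset_union_left (zero_t_mem_Repl_sol (by omega)))
    (S.t_mono _ _ (Nat.sub_le i 1) hiN) le_rfl

theorem row_mem_Repl_sol {x : ℕ} (hl : 1 ≤ l) (hlN : l ≤ S.N) (hx : S.us l ≤ x)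
    (hxv : x ≤ S.v l) : (x, S.t l) ∈ Repl (S.sol l) := by
  have hserving : (S.us l, S.ss l) ∈ Repl (S.sol l) := by
    rw [sol_eq hl hlN, mem_Repl_union]
    exact Or.inl (S.serv_mem l hl hlN).1
  have hadded : S.added45 l ⊆ S.sol l := (sol_eq hl hlN).symm ▸ subset_union_right
  have hvert := (subset_union_left.trans subset_union_left).trans hadded
  have hhoriz := (subset_union_right.trans subset_union_left).trans hadded
  exact mem_Repl_of_horizPath_subset hhoriz
    (mem_Repl_of_vertPath_subset hvert hserving (S.ss_le_t hl hlN) le_rfl) hx hxv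

theorem row_mem_Repl_current {x : ℕ} (hl : 1 ≤ l) (hli : l < i) (hi : i ≤ S.N)
    (hx : S.us l ≤ x) (hxv : x ≤ S.v l) : (x, S.t l) ∈ Repl (S.current i) :=
  Repl_mono (sol_subset_current hli hi) (row_mem_Repl_sol hl (by omega) hx hxv)

theorem column_mem_Repl_current {x : ℕ} (hl : 1 ≤ l) (hli : l < i) (hi : i ≤ S.N)
    (hx : S.t l ≤ x) (hxt : x ≤ S.t l + 4 * S.ρ l) : (S.us l, x) ∈ Repl (S.current i) := by
  have hlN : l ≤ S.N := by omega
  have hadded : S.added45 l ⊆ S.sol l := (sol_eq hl hlN).symm ▸ subset_union_right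
  exact mem_Repl_of_vertPath_subset
    ((subset_union_right.trans hadded).trans (sol_subset_current hli hi))
    (row_mem_Repl_current hl hli hi le_rfl (S.us_le_v hl hlN)) hx hxt

/-- Only columns added in step SQ5 reach beyond `t_i`, and these are already present at `t_i`. -/
theorem mk_t_mem_Repl_current {q : Replica} (hi : 1 ≤ i) (hiN : i ≤ S.N)
    (hq : q ∈ Repl (S.current i)) (ht : S.t i ≤ q.2) : (q.1, S.t i) ∈ Repl (S.current i) := by
  obtain hq | hq | ⟨l, hl, hli, hq⟩ := mem_Repl_current_cases le_rfl hi hiN hq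
  · rw [hq]
    exact zero_t_mem_Repl_current hi hiN
  · rw [fst_eq_zero_of_mem_Repl_current_one hq]
    exact zero_t_mem_Repl_current hi hiN
  · have hlt := S.t_mono l i hli.le hiN
    obtain hq | ⟨hus, hv, hrow | ⟨hcol, htop⟩⟩ := mem_Repl_added45 hl (by omega) hq
    · rw [hq]
      exact zero_t_mem_Repl_current hi hiN
    · rw [le_antisymm (ht.trans hrow) hlt]
      exact row_mem_Repl_current hl hli hiN hus hv
    · rw [hcol]
      exact column_mem_Repl_current hl hli hiN hlt (ht.trans htop)

end Growth

section Radii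

theorem add_rho_le_of_mem_Repl_current {u s : ℕ} (hi : 1 ≤ i) (hiN : i ≤ S.N)
    (hq : (u, s) ∈ Repl (S.current i)) (hu : u ≤ S.v i) (hs : s ≤ S.t i) :
    u + S.ρ i ≤ S.v i ∨ s + S.ρ i ≤ S.t i := by
  have hρ := S.rho_min i hi hiN _ hq
  rw [distInf_of_le (Prod.mk_le_mk.2 ⟨hu, hs⟩), Nat.cast_le] at hρ
  omega

theorem rho_le_v_add_t (hi : 1 ≤ i) (hiN : i ≤ S.N) : S.ρ i ≤ S.v i + S.t i := by
  have := add_rho_le_of_mem_Repl_current hi hiN (Or.inl rfl) (S.v i).zero_le (S.t i).zero_le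
  omega

theorem closest_spec (S : SquareRun) (hi : 1 ≤ i) (hiN : i ≤ S.N) :
    S.u' i ≤ S.v i ∧ S.s' i ≤ S.t i ∧ max (S.v i - S.u' i) (S.t i - S.s' i) = S.ρ i := by
  have hdist := S.closest_dist i hi hiN
  have hle := le_of_distInf_eq_natCast hdist
  rw [distInf_of_le hle, Nat.cast_inj] at hdist
  exact ⟨hle.1, hle.2, hdist⟩

/-- A replica later than `t_i` also bounds the serving node, although it is not in the square. -/
theorem us_le_fst {q : Replica} (hi : 1 ≤ i) (hiN : i ≤ S.N) (hq : q ∈ Repl (S.current i))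
    (hqv : q.1 ≤ S.v i) (hvq : S.v i ≤ q.1 + 5 * S.ρ i) (htq : S.t i ≤ q.2 + 5 * S.ρ i) :
    S.us i ≤ q.1 := by
  obtain ht | ht := le_total q.2 (S.t i)
  · exact S.serv_min i hi hiN q hq
      ⟨Nat.sub_le_iff_le_add.2 hvq, hqv, Nat.sub_le_iff_le_add.2 htq, ht⟩
  · exact S.serv_min i hi hiN (q.1, S.t i) (mk_t_mem_Repl_current hi hiN hq ht)
      ⟨Nat.sub_le_iff_le_add.2 hvq, hqv, Nat.sub_le _ _, le_rfl⟩

theorem us_le_u' (S : SquareRun) (hi : 1 ≤ i) (hiN : i ≤ S.N) : S.us i ≤ S.u' i := by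
  have := S.closest_spec hi hiN
  exact us_le_fst hi hiN (S.closest_mem i hi hiN) this.1 (by omega) (by omega)

theorem uncovered_iff : S.uncovered i ↔ S.v i - S.us i < S.ρ i :=
  not_le

theorem s'_add_rho_of_uncovered (hi : 1 ≤ i) (hiN : i ≤ S.N) (hunc : S.uncovered i) :
    S.s' i + S.ρ i = S.t i := by
  have := S.closest_spec hi hiN
  have := S.us_le_u' hi hiN
  have := uncovered_iff.1 hunc
  omega

end Radii

section Conflicts

/-- Request `j` precedes request `i`, and `SQball(j)` and `SQball(i)` share an edge. -/
structure Conflict (S : SquareRun) (j i : ℕ) : Prop where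
  one_le : 1 ≤ j
  lt : j < i
  le_N : i ≤ S.N
  not_disjoint : ¬ BallsEdgeDisjoint (S.req j) (S.ρ j) (S.req i) (S.ρ i)

theorem ballsEdgeDisjoint_of_not_conflict (hj : 1 ≤ j) (hji : j < i) (hi : i ≤ S.N)
    (h : ¬ S.Conflict j i) : BallsEdgeDisjoint (S.req j) (S.ρ j) (S.req i) (S.ρ i) :=
  not_not.1 fun hd ↦ h ⟨hj, hji, hi, hd⟩

theorem Conflict.t_lt (h : S.Conflict j i) : S.t i < S.t j + S.ρ i := by
  have := not_ballsEdgeDisjoint_iff.1 h.not_disjoint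
  simp only [req] at this
  omega

theorem Conflict.v_lt (h : S.Conflict j i) : S.v j < S.v i + S.ρ j := by
  have := not_ballsEdgeDisjoint_iff.1 h.not_disjoint
  simp only [req] at this
  omega

theorem Conflict.v_lt_us (h : S.Conflict j i) : S.v i < S.us j := by
  obtain ⟨hj, hji, hi, hd⟩ := h
  have hcorner := not_ballsEdgeDisjoint_iff.1 hd
  simp only [req] at hcorner
  have hus := S.us_le_v hj (by omega)
  have ht := S.t_mono j i hji.le hi
  by_contra! hv
  have := add_rho_le_of_mem_Repl_current (by omega) hi
    (row_mem_Repl_current hj hji hi (le_min hus hv) (min_le_left _ _)) (min_le_right _ _) ht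
  omega

theorem Conflict.uncovered_left (h : S.Conflict j i) : S.uncovered j := by
  obtain ⟨hj, hji, hi, -⟩ := id h
  have := h.v_lt_us
  have := h.v_lt
  have := S.us_le_v hj (by omega)
  exact uncovered_iff.2 (by omega)

theorem Conflict.not_row_crosses (h : S.Conflict j i) (hjl : j ≤ l) (hli : l < i) :
    ¬ (S.us l ≤ S.v i ∧ S.v i ≤ S.v l) := by
  rintro ⟨hus, hv⟩
  have hl := h.one_le.trans hjl
  have ht := h.t_lt
  have htjl := S.t_mono j l hjl (hli.le.trans h.le_N)
  have htli := S.t_mono l i hli.le h.le_N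
  have := add_rho_le_of_mem_Repl_current (by omega) h.le_N
    (row_mem_Repl_current hl hli h.le_N hus hv) le_rfl htli
  omega

/-- Otherwise there is no room for the closest replica of `i`, which is to the left of `us j`: it
has not been added since request `j`, as the row of the adding request would provide a later replica
at the same node, and it is not older, as it would then be a better serving replica for `j`. -/
theorem Conflict.four_mul_rho_lt (h : S.Conflict j i) (hunc : S.uncovered i) :
    4 * S.ρ j < S.ρ i := by
  obtain ⟨hj, hji, hi, -⟩ := id h
  have hi1 : 1 ≤ i := by omega
  have ht := h.t_lt
  have htji := S.t_mono j i hji.le hi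
  have hclosest := S.closest_spec hi1 hi
  have hs' := s'_add_rho_of_uncovered hi1 hi hunc
  have hlatest : ∀ s, S.t j ≤ s → s ≤ S.t i → (S.u' i, s) ∉ Repl (S.current i) := by
    intro s hsj hsi hs
    have := S.closest_late i hi1 hi s hsi hs
    omega
  have hnode : S.u' i ≠ 0 := fun hzero ↦
    hlatest (S.t i) htji le_rfl (hzero ▸ zero_t_mem_Repl_current hi1 hi)
  by_contra! hρ
  obtain hq | hq | ⟨l, hjl, hli, hq⟩ :=
    mem_Repl_current_cases hj hji.le hi (S.closest_mem i hi1 hi)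
  · exact hnode hq
  · have := h.v_lt
    have := h.v_lt_us
    have := S.us_le_v hj (by omega)
    have : S.us j ≤ S.u' i := us_le_fst hj (by omega) hq (by omega) (by omega) (by omega)
    omega
  · have hlN : l ≤ S.N := by omega
    obtain hq | ⟨hus, hv, -⟩ := mem_Repl_added45 (hj.trans hjl) hlN hq
    · exact hnode hq
    · exact hlatest (S.t l) (S.t_mono j l hjl hlN) (S.t_mono l i hli.le hi)
        (row_mem_Repl_current (hj.trans hjl) hli hi hus hv)

theorem Conflict.v_lt_us_of_column (h : S.Conflict k i) (hl : 1 ≤ l) (hlk : l < k)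
    (hcol : S.t k ≤ S.t l + 4 * S.ρ l) (hus : S.v i ≤ S.us l) : S.v k < S.us l := by
  obtain ⟨-, hki, hi, -⟩ := id h
  have := h.v_lt
  by_contra! hv
  have := add_rho_le_of_mem_Repl_current (by omega) (by omega)
    (column_mem_Repl_current hl hlk (by omega) (S.t_mono l k hlk.le (by omega)) hcol) hv le_rfl
  omega

/-- While the column of `j` is growing past `t_k`, no replica is added at the nodes between `v i`
and `v k`: its column would be even longer and would come too close to `r_k`. -/
theorem Conflict.snd_add_lt_of_between (hj : S.Conflict j i) (hk : S.Conflict k i) (hjk : j < k)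
    (hcol : S.t k < S.t j + 4 * S.ρ j) (hjl : j ≤ l) (hlk : l ≤ k) {q : Replica}
    (hq : q ∈ Repl (S.current l)) (hvi : S.v i < q.1) (hvk : q.1 ≤ S.v k) :
    q.2 + 5 * S.ρ j < S.t j := by
  obtain ⟨hj1, -, hi, -⟩ := id hj
  have hki := hk.lt
  induction l, hjl using Nat.le_induction generalizing q with
  | base =>
    have := hj.v_lt
    have := S.us_le_v hj1 (by omega)
    have := hk.v_lt_us_of_column hj1 hjk hcol.le hj.v_lt_us.le
    by_contra! hs
    have := us_le_fst hj1 (by omega) hq (by omega) (by omega) hs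
    omega
  | succ l hjl ih =>
    have hl : 1 ≤ l := hj1.trans hjl
    have hlN : l ≤ S.N := by omega
    obtain hq | hq | hq := mem_Repl_current_succ hl hlN hq
    · omega
    · exact ih (by omega) hq hvi hvk
    obtain hq | ⟨hus, hv, -⟩ := mem_Repl_added45 hl hlN hq
    · omega
    exfalso
    obtain husi | husi := Nat.lt_or_ge (S.v i) (S.us l)
    · have hserving := ih (by omega) (S.serv_mem l hl hlN).1 husi (hus.trans hvk)
      have := S.t_le_ss_add hl hlN
      have := S.t_mono j l hjl hlN
      have := hk.v_lt_us_of_column hl hlk (by omega) husi.le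
      omega
    · exact hj.not_row_crosses hjl (by omega) ⟨husi, by omega⟩

theorem Conflict.t_add_le_of_not_conflict (hj : S.Conflict j i) (hk : S.Conflict k i)
    (hjk : j < k) (hunc : S.uncovered k) (hnot : ¬ S.Conflict j k) :
    S.t j + 4 * S.ρ j ≤ S.t k := by
  have hj1 := hj.one_le
  have hk1 := hk.one_le
  have hkN := hk.lt.le.trans hk.le_N
  by_contra! hcol
  have hu' := S.us_le_u' hk1 hkN
  have hclosest := S.closest_spec hk1 hkN
  have hvi := hk.v_lt_us
  have hold : S.s' k + 5 * S.ρ j < S.t j :=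
    hj.snd_add_lt_of_between hk hjk hcol hjk.le le_rfl (S.closest_mem k hk1 hkN)
      (hvi.trans_le hu') hclosest.1
  have hs' := s'_add_rho_of_uncovered hk1 hkN hunc
  refine hnot ⟨hj1, hjk, hkN, not_ballsEdgeDisjoint_iff.2 ?_⟩
  have := hk.v_lt
  have := hj.v_lt
  have := hk.v_lt_us_of_column hj1 hjk hcol.le hj.v_lt_us.le
  have := S.us_le_v hj1 (by omega)
  have := S.t_mono j k hjk.le hkN
  simp only [req]
  omega

end Conflicts

section Forest

theorem IsParent.conflict (h : S.IsParent i j) : S.Conflict j i :=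
  ⟨h.1, h.2.1, h.2.2.1, h.2.2.2.2.2.1⟩

theorem IsParent.uncovered (h : S.IsParent i j) : S.uncovered i :=
  h.2.2.2.2.1

theorem IsParent.uncovered_child (h : S.IsParent i j) : S.uncovered j :=
  h.2.2.2.1

theorem IsParent.t_add_le (hj : S.IsParent i j) (hk : S.IsParent i k) (hjk : j < k) :
    S.t j + 4 * S.ρ j ≤ S.t k :=
  hj.conflict.t_add_le_of_not_conflict hk.conflict hjk hk.uncovered_child fun h ↦
    h.not_disjoint (hj.2.2.2.2.2.2 k hjk hk.conflict.lt hk.uncovered_child)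

theorem exists_isParent (hj : 1 ≤ j) (hjN : j ≤ S.N) (hunc : S.uncovered j)
    (hroot : ¬ S.IsRoot j) : ∃ i, S.IsParent i j := by
  classical
  have hex : ∃ i, S.uncovered i ∧ S.Conflict j i := by
    by_contra! hnone
    exact hroot ⟨hj, hjN, hunc, fun i hji hi hunci ↦
      ballsEdgeDisjoint_of_not_conflict hj hji hi (hnone i hunci)⟩
  obtain ⟨hunci, -, hji, hi, hd⟩ := Nat.find_spec hex
  exact ⟨Nat.find hex, hj, hji, hi, hunc, hunci, hd, fun k hjk hki hunck ↦
    ballsEdgeDisjoint_of_not_conflict hj hjk (hki.le.trans hi) fun h ↦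
      Nat.find_min hex hki ⟨hunck, h⟩⟩

theorem two_mul_sum_children_le {C : Finset ℕ} (hC : ∀ j ∈ C, S.IsParent i j) :
    2 * ∑ j ∈ C, S.ρ j ≤ S.ρ i := by
  have hdisj : (C : Set ℕ).PairwiseDisjoint fun j ↦ Ico (S.t j) (S.t j + 4 * S.ρ j) := by
    intro j hj k hk hjk
    wlog hlt : j < k generalizing j k
    · exact (this hk hj hjk.symm (by omega)).symm
    have := (hC j hj).t_add_le (hC k hk) hlt
    exact disjoint_left.2 fun x hxj hxk ↦ by rw [mem_Ico] at hxj hxk; omega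
  have hsub : ∀ j ∈ C,
      Ico (S.t j) (S.t j + 4 * S.ρ j) ⊆ Ico (S.t i - S.ρ i) (S.t i + S.ρ i) := by
    intro j hj
    have hconf := (hC j hj).conflict
    have := hconf.t_lt
    have := hconf.four_mul_rho_lt (hC j hj).uncovered
    have := S.t_mono j i hconf.lt.le hconf.le_N
    exact Ico_subset_Ico (by omega) (by omega)
  have hcard := sum_card_le_card_of_pairwiseDisjoint hdisj hsub
  simp only [Nat.card_Ico, Nat.add_sub_cancel_left, ← mul_sum] at hcard
  omega

end Forest

section Sums

variable {F : Finset GEdge}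

theorem sum_radii_le_card_of_not_conflict (hF : S.Feasible F) {I : Finset ℕ}
    (hI : I ⊆ Icc 1 S.N) (hfree : ∀ j ∈ I, ∀ i ∈ I, ¬ S.Conflict j i) :
    ∑ i ∈ I, S.ρ i ≤ #F := by
  have hrange : ∀ i ∈ I, 1 ≤ i ∧ i ≤ S.N := fun i hi ↦ mem_Icc.1 (hI hi)
  refine sum_radii_le_card_of_ballsEdgeDisjoint (q := (0, 0)) (r := S.req) hF.1
    (fun i hi ↦ hF.2.1 i (hrange i hi).1 (hrange i hi).2) (fun i hi ↦ ?_) ?_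
  · simpa only [zero_add, req] using rho_le_v_add_t (hrange i hi).1 (hrange i hi).2
  · intro j hj i hi hji
    wlog hlt : j < i generalizing j i
    · exact (this hi hj hji.symm (by omega)).symm
    exact ballsEdgeDisjoint_of_not_conflict (hrange j hj).1 hlt (hrange i hi).2 (hfree j hj i hi)

open scoped Classical in
theorem sum_covered_le_card (hF : S.Feasible F) :
    ∑ i ∈ Icc 1 S.N with S.covered i, S.ρ i ≤ #F :=
  sum_radii_le_card_of_not_conflict hF (filter_subset _ _) fun _ hj _ _ h ↦
    h.uncovered_left (mem_filter.1 hj).2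

open scoped Classical in
theorem sum_roots_le_card (hF : S.Feasible F) :
    ∑ i ∈ Icc 1 S.N with S.IsRoot i, S.ρ i ≤ #F :=
  sum_radii_le_card_of_not_conflict hF (filter_subset _ _) fun _ hj i hi h ↦
    h.not_disjoint ((mem_filter.1 hj).2.2.2.2 i h.lt h.le_N (mem_filter.1 hi).2.2.2.1)

open scoped Classical in
theorem sum_uncovered_le_two_mul_sum_roots :
    ∑ i ∈ Icc 1 S.N with ¬ S.covered i, S.ρ i ≤ 2 * ∑ i ∈ Icc 1 S.N with S.IsRoot i, S.ρ i := by
  refine sum_le_two_mul_sum_of_children (P := S.IsParent) (fun j hj hroot ↦ ?_) fun i _ ↦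
    two_mul_sum_children_le fun j hj ↦ (mem_filter.1 hj).2
  obtain ⟨hjN, hunc⟩ := mem_filter.1 hj
  obtain ⟨i, hij⟩ := exists_isParent (mem_Icc.1 hjN).1 (mem_Icc.1 hjN).2 hunc fun h ↦
    hroot (mem_filter.2 ⟨hjN, h⟩)
  have hji := hij.conflict.lt
  exact ⟨i, mem_filter.2 ⟨mem_Icc.2 ⟨by omega, hij.conflict.le_N⟩, hij.uncovered⟩, hij⟩

end Sums

end SquareRun

/-- The sum of all radii computed by Square is at most three times the optimum:
`Σ_{i=1}^{N} ρ(i) ≤ 3·|opt|`. -/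
theorem sum_radii_le_three_opt (S : SquareRun) :
    ∀ F : Finset GEdge, S.Feasible F →
      ∑ i ∈ Finset.Icc 1 S.N, S.ρ i ≤ 3 * F.card := by
  classical
  intro F hF
  calc ∑ i ∈ Icc 1 S.N, S.ρ i
    _ = ∑ i ∈ Icc 1 S.N with S.covered i, S.ρ i + ∑ i ∈ Icc 1 S.N with ¬ S.covered i, S.ρ i :=
      (sum_filter_add_sum_filter_not _ _ _).symm
    _ ≤ #F + 2 * ∑ i ∈ Icc 1 S.N with S.IsRoot i, S.ρ i :=
      add_le_add (SquareRun.sum_covered_le_card hF) SquareRun.sum_uncovered_le_two_mul_sum_roots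
    _ ≤ #F + 2 * #F := by gcongr; exact SquareRun.sum_roots_le_card hF
    _ = 3 * #F := by ring
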